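/- Decomposition of the mixer unitary into single-qubit rotations: for every n ≥ 1 and every real β, Matrix.exp(−(I*β/2) • ∑_{i : Fin n} X i) = ∏_{i : Fin n} (Real.cos(β/2) • 1 − (I * Real.sin(β/2)) • X i), i.e., the exponential of the mixer Hamiltonian factors as a product of Rx(β) rotation gates acting on each qubit. -/

import Mathlib

open Complex Matrix

/-- Pauli-X on qubit `i` of `n` qubits. -/
def PauliX (n : ℕ) (i : Fin n) : Matrix (Fin n → Fin 2) (Fin n → Fin 2) ℂ :=
  fun x y => if (∀ j, j ≠ i → x j = y j) ∧ x i ≠ y i then 1 else 0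

/-- Pauli-Z on qubit `i` of `n` qubits. -/
def PauliZ (n : ℕ) (i : Fin n) : Matrix (Fin n → Fin 2) (Fin n → Fin 2) ℂ :=
  Matrix.diagonal fun x => (-1 : ℂ) ^ (x i : ℕ)

/-- Flip bit `i` of a bit string. -/
def bitFlip (n : ℕ) (i : Fin n) (x : Fin n → Fin 2) : Fin n → Fin 2 :=
  Function.update x i (x i + 1)

lemma pauliX_cond_iff (n : ℕ) (i : Fin n) (x y : Fin n → Fin 2) :
    ((∀ j, j ≠ i → x j = y j) ∧ x i ≠ y i) ↔ y = bitFlip n i x := by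
  constructor
  · rintro ⟨h1, h2⟩
    funext j
    by_cases hj : j = i
    · subst hj
      simp only [bitFlip, Function.update_self]
      revert h2
      generalize x j = a; generalize y j = b
      revert a b; decide
    · rw [bitFlip, Function.update_of_ne hj]
      exact (h1 j hj).symm
  · rintro rfl
    refine ⟨fun j hj => ?_, ?_⟩
    · rw [bitFlip, Function.update_of_ne hj]
    · simp only [bitFlip, Function.update_self]
      generalize x i = a
      revert a; decide

lemma pauliX_eq (n : ℕ) (i : Fin n) :
    PauliX n i = fun x y => if y = bitFlip n i x then 1 else 0 := by
  funext x y
  rw [PauliX, if_congr (pauliX_cond_iff n i x y) rfl rfl]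

lemma pauliX_mul_pauliX (n : ℕ) (i j : Fin n) :
    PauliX n i * PauliX n j
      = fun x y => if y = bitFlip n j (bitFlip n i x) then 1 else 0 := by
  funext x y
  simp only [Matrix.mul_apply]
  rw [pauliX_eq, pauliX_eq]
  beta_reduce
  rw [Finset.sum_eq_single (bitFlip n i x)]
  · simp
  · intro z _ hz
    rw [if_neg hz, zero_mul]
  · intro h; exact absurd (Finset.mem_univ _) h

lemma bitFlip_comm (n : ℕ) (i j : Fin n) (x : Fin n → Fin 2) :
    bitFlip n j (bitFlip n i x) = bitFlip n i (bitFlip n j x) := by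
  rcases eq_or_ne i j with rfl | h
  · rfl
  · simp only [bitFlip, Function.update_of_ne h, Function.update_of_ne (Ne.symm h),
      Function.update_self]
    exact Function.update_comm h _ _ x

lemma pauliX_commute (n : ℕ) (i j : Fin n) : Commute (PauliX n i) (PauliX n j) := by
  show _ * _ = _ * _
  rw [pauliX_mul_pauliX, pauliX_mul_pauliX]
  funext x y
  rw [bitFlip_comm]

lemma pauliZ_commute (n : ℕ) (i j : Fin n) : Commute (PauliZ n i) (PauliZ n j) := by
  show _ * _ = _ * _
  simp only [PauliZ, Matrix.diagonal_mul_diagonal]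
  have h : (fun x : Fin n → Fin 2 => (-1 : ℂ) ^ (x i : ℕ) * (-1) ^ (x j : ℕ))
      = fun x : Fin n → Fin 2 => (-1 : ℂ) ^ (x j : ℕ) * (-1) ^ (x i : ℕ) := by
    funext x; ring
  rw [h]

/-- The flip-all operator `∏ i, X i`. -/
def flipAll (n : ℕ) : Matrix (Fin n → Fin 2) (Fin n → Fin 2) ℂ :=
  Finset.univ.noncommProd (PauliX n) fun a _ b _ _ => pauliX_commute n a b

/-- The parity operator `∏ i ∈ S, Z i`. -/
def ZProd (n : ℕ) (S : Finset (Fin n)) : Matrix (Fin n → Fin 2) (Fin n → Fin 2) ℂ :=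
  S.noncommProd (PauliZ n) fun a _ b _ _ => pauliZ_commute n a b

/-- The uniform superposition state. -/
noncomputable def psiPlus (n : ℕ) : (Fin n → Fin 2) → ℂ :=
  fun _ => (((Real.sqrt 2)⁻¹ : ℝ) : ℂ) ^ n

/-- The rotation gate `Rx(β)` on qubit `i`: `cos(β/2) • 1 - i sin(β/2) • X i`. -/
noncomputable def RxGate (n : ℕ) (β : ℝ) (i : Fin n) :
    Matrix (Fin n → Fin 2) (Fin n → Fin 2) ℂ :=
  (Real.cos (β / 2) : ℂ) • 1 - (Complex.I * (Real.sin (β / 2) : ℂ)) • PauliX n i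

lemma RxGate_commute (n : ℕ) (β : ℝ) (i j : Fin n) :
    Commute (RxGate n β i) (RxGate n β j) :=
  (((Commute.one_left _).smul_left _).sub_left
    ((((Commute.one_right _).smul_right _).sub_right
      ((pauliX_commute n i j).smul_right _)).smul_left _))

/-- The rotation `cos (θ / 2) - i sin (θ / 2) a` generated by an involution `a`, with a complex
angle `θ`. It makes sense in any complex algebra; `RxGate` is the case `a = PauliX n i`. -/
noncomputable def involutionRotation {A : Type*} [Ring A] [Algebra ℂ A] (θ : ℂ) (a : A) : A :=
  cos (θ / 2) • 1 - (I * sin (θ / 2)) • a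

section Algebra

variable {A : Type*} [Ring A] [Algebra ℂ A]

lemma commute_involutionRotation {a b : A} (h : Commute a b) (θ φ : ℂ) :
    Commute (involutionRotation θ a) (involutionRotation φ b) :=
  ((Commute.one_left _).smul_left _).sub_left
    (((Commute.one_right _).smul_right _).sub_right ((h.smul_left _).smul_right _))

variable [TopologicalSpace A] [IsTopologicalRing A] [ContinuousSMul ℂ A] [T2Space A]

lemma exp_smul_of_mul_self_eq_one {a : A} (ha : a * a = 1) (c : ℂ) :
    NormedSpace.exp (c • a) = cosh c • 1 + sinh c • a := by
  have pow_even (k : ℕ) : a ^ (2 * k) = 1 := by rw [pow_mul, sq, ha, one_pow]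
  have pow_odd (k : ℕ) : a ^ (2 * k + 1) = a := by rw [pow_succ, pow_even, one_mul]
  rw [NormedSpace.exp_eq_tsum ℂ]
  refine (HasSum.even_add_odd ?_ ?_).tsum_eq
  · simpa only [smul_pow, pow_even, smul_smul, div_eq_inv_mul]
      using (hasSum_cosh c).smul_const (1 : A)
  · simpa only [smul_pow, pow_odd, smul_smul, div_eq_inv_mul]
      using (hasSum_sinh c).smul_const a

lemma exp_smul_eq_involutionRotation {a : A} (ha : a * a = 1) (θ : ℂ) :
    NormedSpace.exp ((-(I * θ / 2)) • a) = involutionRotation θ a := by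
  have angle : -(I * θ / 2) = -(θ / 2 * I) := by ring
  rw [exp_smul_of_mul_self_eq_one ha, angle, cosh_neg, sinh_neg, cosh_mul_I, sinh_mul_I,
    neg_smul, ← sub_eq_add_neg, mul_comm (sin _), involutionRotation]

end Algebra

lemma bitFlip_involutive (n : ℕ) (i : Fin n) : Function.Involutive (bitFlip n i) := by
  intro x
  have add_one_add_one (b : Fin 2) : b + 1 + 1 = b := by decide +revert
  simp only [bitFlip, Function.update_self, Function.update_idem, add_one_add_one,
    Function.update_eq_self]

lemma pauliX_mul_self (n : ℕ) (i : Fin n) : PauliX n i * PauliX n i = 1 := by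
  ext x y
  simp only [pauliX_mul_pauliX, bitFlip_involutive n i x, Matrix.one_apply, eq_comm]

lemma RxGate_eq_involutionRotation (n : ℕ) (β : ℝ) :
    RxGate n β = fun i => involutionRotation (β : ℂ) (PauliX n i) := by
  funext i
  simp only [RxGate, involutionRotation, ofReal_cos, ofReal_sin, ofReal_div, ofReal_ofNat]

theorem exp_mixer_eq_prod_Rx_general {ι m : Type*} [Fintype m] [DecidableEq m] (s : Finset ι)
    (θ : ι → ℂ) (X : ι → Matrix m m ℂ) (hX : ∀ i ∈ s, X i * X i = 1)
    (hcomm : (s : Set ι).Pairwise (Function.onFun Commute X)) :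
    NormedSpace.exp (∑ i ∈ s, (-(I * θ i / 2)) • X i)
      = s.noncommProd (fun i => involutionRotation (θ i) (X i))
          (fun _ hi _ hj hij => commute_involutionRotation (hcomm hi hj hij) _ _) := by
  rw [Matrix.exp_sum_of_commute s _
    fun _ hi _ hj hij => ((hcomm hi hj hij).smul_left _).smul_right _]
  exact Finset.noncommProd_congr rfl
    (fun i hi => exp_smul_eq_involutionRotation (hX i hi) (θ i)) _

/-- **Decomposition of the mixer unitary into single-qubit rotations**:
`exp(-(iβ/2) ∑ X i) = ∏ Rx(β) i`. -/
theorem exp_mixer_eq_prod_Rx (n : ℕ) (hn : 1 ≤ n) (β : ℝ) :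
    NormedSpace.exp ((-(Complex.I * (β : ℂ) / 2)) • ∑ i, PauliX n i)
      = Finset.univ.noncommProd (RxGate n β) (fun a _ b _ _ => RxGate_commute n β a b) := by
  simpa only [Finset.smul_sum, RxGate_eq_involutionRotation] using
    exp_mixer_eq_prod_Rx_general Finset.univ (fun _ => (β : ℂ)) (PauliX n)
      (fun i _ => pauliX_mul_self n i) (fun i _ j _ _ => pauliX_commute n i j)
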